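/- Let m and Q be real numbers with 0 < Q^2 < m^2, set r₊ = m + √(m² − Q²), r₋ = m − √(m² − Q²), let f₂ : (0, mπ) → (r₋, r₊) be the inverse of F(r) = 2m·arccos((r₊ − r)/(r₊ − r₋)) − √((r₊ − r)(r − r₋)), and let f₁(μ) = √(−1 + 2m/f₂(μ) − Q²/f₂(μ)²). Then f₁(μ) > 0 for all μ ∈ (0, mπ), f₂ is strictly increasing on (0, mπ), and f₂ maps (0, mπ) onto (r₋, r₊). -/

import Mathlib

/-!
Write `a = r₋` and `b = r₊`. The function `F` is not a primitive of `1 / N` (that primitive has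
`arccos √((b - r) / (b - a))` in place of `arccos ((b - r) / (b - a))`), so its monotonicity cannot
be read off from `N² > 0`. In the variable `u = (b - r) / (b - a) ∈ [0, 1]`, which decreases in `r`,
it becomes `c arccos u - k √(u (1 - u))` with `c = a + b` and `k = b - a`. Its derivative is
negative on `(0, 1)` because `k (2u - 1) ≤ √2 c u` and `1 - u² ≤ 2 (1 - u)`. Hence `F` increases
strictly from `F a = 0` to `F b = m π`, and every right inverse of `F` with values in `(a, b)` is
strictly increasing and onto. Finally `f₁² = (b - f₂) (f₂ - a) / f₂²` is positive.
-/

open Set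

section RightInverse

variable {α β : Type*} [LinearOrder α] [Preorder β] {f : α → β} {g : β → α}

lemma strictMonoOn_of_rightInvOn_of_mapsTo {s : Set α} {t : Set β} (hf : StrictMonoOn f s)
    (hfg : RightInvOn g f t) (hg : MapsTo g t s) : StrictMonoOn g t := by
  intro x hx y hy hxy
  rwa [← hf.lt_iff_lt (hg hx) (hg hy), hfg hx, hfg hy]

lemma image_Ioo_eq_of_rightInvOn_of_mapsTo {a b : α} (hf : StrictMonoOn f (Icc a b))
    (hfg : RightInvOn g f (Ioo (f a) (f b))) (hg : MapsTo g (Ioo (f a) (f b)) (Ioo a b)) :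
    g '' Ioo (f a) (f b) = Ioo a b := by
  have hinj : InjOn f (Ioo a b) := hf.injOn.mono Ioo_subset_Icc_self
  have hgf : LeftInvOn g f (Ioo a b) := hinj.rightInvOn_of_leftInvOn hfg hf.mapsTo_Ioo hg
  exact (hgf.surjOn hf.mapsTo_Ioo).image_eq_of_mapsTo hg

end RightInverse

section LapseFunction

variable {a b r : ℝ}

lemma lapse_sq_eq (hr₀ : r ≠ 0) :
    -1 + (a + b) / r - a * b / r ^ 2 = (b - r) * (r - a) / r ^ 2 := by
  field_simp
  ring

lemma lapse_sq_pos (hr₀ : r ≠ 0) (hr : r ∈ Ioo a b) :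
    0 < -1 + (a + b) / r - a * b / r ^ 2 := by
  rw [lapse_sq_eq hr₀]
  exact div_pos (mul_pos (sub_pos.2 hr.2) (sub_pos.2 hr.1)) (by positivity)

end LapseFunction

section ArccosSubSqrt

variable {c k u : ℝ}

lemma hasDerivAt_arccos_sub_sqrt (c k : ℝ) (hu : u ∈ Ioo (0 : ℝ) 1) :
    HasDerivAt (fun u ↦ c * Real.arccos u - k * √(u * (1 - u)))
      (k * (2 * u - 1) / (2 * √(u * (1 - u))) - c / √(1 - u ^ 2)) u := by
  have hprod : HasDerivAt (fun u : ℝ ↦ u * (1 - u)) (1 - 2 * u) u :=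
    ((hasDerivAt_id' u).mul ((hasDerivAt_id' u).const_sub 1)).congr_deriv (by ring)
  have hne : u * (1 - u) ≠ 0 := (mul_pos hu.1 (sub_pos.2 hu.2)).ne'
  have harccos := Real.hasDerivAt_arccos (by linarith [hu.1]) hu.2.ne
  exact ((harccos.const_mul c).sub ((hprod.sqrt hne).const_mul k)).congr_deriv (by ring)

/-- The constant `√2` is optimal, as the limit `u → 1` shows. -/
lemma mul_sqrt_one_sub_sq_lt (hk₀ : 0 ≤ k) (hc : 0 < c) (hk : k ≤ √2 * c)
    (hu : u ∈ Ioo (0 : ℝ) 1) :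
    k * (2 * u - 1) * √(1 - u ^ 2) < c * (2 * √(u * (1 - u))) := by
  obtain ⟨hu₀, hu₁⟩ := hu
  have hlin : k * (2 * u - 1) ≤ √2 * c * u := by
    calc k * (2 * u - 1) ≤ k * u := by gcongr; linarith
      _ ≤ √2 * c * u := by gcongr
  have hsqrt : √(1 - u ^ 2) ≤ √2 * √(1 - u) := by
    rw [← Real.sqrt_mul zero_le_two]
    exact Real.sqrt_le_sqrt (by nlinarith)
  have hu_lt : u * √(1 - u) < √u * √(1 - u) :=
    mul_lt_mul_of_pos_right (Real.lt_sqrt_self_iff.2 ⟨hu₀.ne', hu₁⟩)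
      (Real.sqrt_pos.2 (sub_pos.2 hu₁))
  calc k * (2 * u - 1) * √(1 - u ^ 2)
      ≤ √2 * c * u * (√2 * √(1 - u)) := by gcongr
    _ = c * (2 * (u * √(1 - u))) := by
        linear_combination c * u * √(1 - u) * Real.sq_sqrt zero_le_two
    _ < c * (2 * (√u * √(1 - u))) := by gcongr
    _ = c * (2 * √(u * (1 - u))) := by rw [Real.sqrt_mul hu₀.le]

lemma strictAntiOn_arccos_sub_sqrt (hk₀ : 0 ≤ k) (hc : 0 < c) (hk : k ≤ √2 * c) :
    StrictAntiOn (fun u ↦ c * Real.arccos u - k * √(u * (1 - u))) (Icc 0 1) := by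
  refine strictAntiOn_of_deriv_neg (convex_Icc 0 1) ?_ fun u hu ↦ ?_
  · have := Real.continuous_arccos
    fun_prop
  · rw [interior_Icc] at hu
    have hprod : 0 < u * (1 - u) := mul_pos hu.1 (sub_pos.2 hu.2)
    have hsq : 0 < 1 - u ^ 2 := by nlinarith [hu.1, hu.2]
    rw [(hasDerivAt_arccos_sub_sqrt c k hu).deriv, sub_neg,
      div_lt_div_iff₀ (by positivity) (by positivity)]
    exact mul_sqrt_one_sub_sq_lt hk₀ hc hk hu

end ArccosSubSqrt

/-- The function whose inverse is the warping function `f₂`, for horizons of radii `a < b` and with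
the coefficient `c` of the `arccos` term left free; `c = 2 m = a + b` gives the function `F` of the
Reissner–Nordström metric. -/
noncomputable def horizonTime (c a b r : ℝ) : ℝ :=
  c * Real.arccos ((b - r) / (b - a)) - √((b - r) * (r - a))

namespace horizonTime

variable {a b c : ℝ}

lemma left (c : ℝ) (hab : a ≠ b) : horizonTime c a b a = 0 := by
  simp [horizonTime, sub_ne_zero.2 hab.symm]

lemma right (c a b : ℝ) : horizonTime c a b b = c * (Real.pi / 2) := by
  simp [horizonTime]

lemma eq_arccos_sub_sqrt (c : ℝ) (hab : a < b) (r : ℝ) :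
    horizonTime c a b r = c * Real.arccos ((b - r) / (b - a)) -
      (b - a) * √((b - r) / (b - a) * (1 - (b - r) / (b - a))) := by
  have hd : 0 < b - a := sub_pos.2 hab
  have hprod : (b - r) * (r - a) =
      (b - a) ^ 2 * ((b - r) / (b - a) * (1 - (b - r) / (b - a))) := by
    field_simp
    ring
  rw [horizonTime, hprod, Real.sqrt_mul (sq_nonneg _), Real.sqrt_sq hd.le]

protected lemma strictMonoOn (hc : b - a ≤ √2 * c) :
    StrictMonoOn (horizonTime c a b) (Icc a b) := by
  intro r hr s hs hrs
  have hab : a < b := hr.1.trans_lt (hrs.trans_le hs.2)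
  have hd : 0 < b - a := sub_pos.2 hab
  have hc₀ : 0 < c := pos_of_mul_pos_right (hd.trans_le hc) (Real.sqrt_nonneg 2)
  have hmem {x : ℝ} (hx : x ∈ Icc a b) : (b - x) / (b - a) ∈ Icc (0 : ℝ) 1 :=
    ⟨div_nonneg (sub_nonneg.2 hx.2) hd.le, (div_le_one hd).2 (by linarith [hx.1])⟩
  rw [eq_arccos_sub_sqrt c hab, eq_arccos_sub_sqrt c hab]
  exact strictAntiOn_arccos_sub_sqrt hd.le hc₀ hc (hmem hs) (hmem hr) (by gcongr)

end horizonTime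

/-- In the multiply warped product representation of the interior of a
nonextremal Reissner–Nordström black hole (mass `m > 0`, charge `Q`, `0 < Q² < m²`),
where `f₂ : (0, mπ) → (r₋, r₊)` is the inverse of
`F(r) = 2m·arccos((r₊ − r)/(r₊ − r₋)) − √((r₊ − r)(r − r₋))` and
`f₁(μ) = √(−1 + 2m/f₂(μ) − Q²/f₂(μ)²)`, one has `f₁ > 0` on `(0, mπ)`, `f₂` is
strictly increasing on `(0, mπ)`, and `f₂` maps `(0, mπ)` onto `(r₋, r₊)`. -/
theorem reissner_nordstrom_f1_pos_f2_mono (m Q : ℝ) (hm : 0 < m)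
    (hQ : 0 < Q ^ 2) (hQm : Q ^ 2 < m ^ 2)
    (rp rm : ℝ)
    (hrp : rp = m + Real.sqrt (m ^ 2 - Q ^ 2))
    (hrm : rm = m - Real.sqrt (m ^ 2 - Q ^ 2))
    (F f₁ f₂ : ℝ → ℝ)
    (hF : ∀ r, F r = 2 * m * Real.arccos ((rp - r) / (rp - rm))
        - Real.sqrt ((rp - r) * (r - rm)))
    (hf₂mem : ∀ μ ∈ Set.Ioo 0 (m * Real.pi), f₂ μ ∈ Set.Ioo rm rp)
    (hf₂inv : ∀ μ ∈ Set.Ioo 0 (m * Real.pi), F (f₂ μ) = μ)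
    (hf₁ : ∀ μ, f₁ μ = Real.sqrt (-1 + 2 * m / f₂ μ - Q ^ 2 / (f₂ μ) ^ 2)) :
    (∀ μ ∈ Set.Ioo 0 (m * Real.pi), 0 < f₁ μ) ∧
    StrictMonoOn f₂ (Set.Ioo 0 (m * Real.pi)) ∧
    f₂ '' Set.Ioo 0 (m * Real.pi) = Set.Ioo rm rp := by
  have hs : 0 < √(m ^ 2 - Q ^ 2) := Real.sqrt_pos.2 (sub_pos.2 hQm)
  have hsum : 2 * m = rm + rp := by rw [hrp, hrm]; ring
  have hprod : Q ^ 2 = rm * rp := by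
    rw [hrp, hrm]
    linear_combination Real.sq_sqrt (sub_nonneg.2 hQm.le)
  have hlt : rm < rp := by linarith
  have hrm₀ : 0 < rm := pos_of_mul_pos_left (hprod ▸ hQ) (by linarith)
  obtain rfl : F = horizonTime (2 * m) rm rp := funext hF
  have hmono : StrictMonoOn (horizonTime (2 * m) rm rp) (Icc rm rp) :=
    horizonTime.strictMonoOn (by nlinarith [Real.one_lt_sqrt_two])
  have hIoo : Ioo 0 (m * Real.pi) =
      Ioo (horizonTime (2 * m) rm rp rm) (horizonTime (2 * m) rm rp rp) := by
    rw [horizonTime.left _ hlt.ne, horizonTime.right]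
    ring_nf
  refine ⟨fun μ hμ ↦ ?_, ?_, ?_⟩
  · rw [hf₁, Real.sqrt_pos, hsum, hprod]
    exact lapse_sq_pos (hrm₀.trans (hf₂mem μ hμ).1).ne' (hf₂mem μ hμ)
  · exact strictMonoOn_of_rightInvOn_of_mapsTo hmono hf₂inv
      fun μ hμ ↦ Ioo_subset_Icc_self (hf₂mem μ hμ)
  · rw [hIoo] at hf₂mem hf₂inv ⊢
    exact image_Ioo_eq_of_rightInvOn_of_mapsTo hmono hf₂inv hf₂mem
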